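/- π²/10 equals ₄F₃(1/4, 1/4, 1/4, 3/4; 1/2, 5/4, 5/4; 1/16) − (1/72)·₄F₃(3/4, 3/4, 3/4, 5/4; 3/2, 7/4, 7/4; 1/16). Concretely, π²/10 equals the sum over n ≥ 0 of ((1/4)ₙ)³·(3/4)ₙ / ((1/2)ₙ·((5/4)ₙ)²·n!) · (1/16)ⁿ minus (1/72) times the sum over n ≥ 0 of ((3/4)ₙ)³·(5/4)ₙ / ((3/2)ₙ·((7/4)ₙ)²·n!) · (1/16)ⁿ. -/

import Mathlib

open Real

/-- The Pochhammer symbol (shifted factorial) `(a)ₙ` for a real number `a`. -/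
noncomputable def poch (a : ℝ) (n : ℕ) : ℝ := Polynomial.eval a (ascPochhammer ℝ n)

/-!
Let `A x = ∫₀ˣ arsinh t / t dt`. Differentiation shows
`A (sinh t) = t² / 2 + Li₂ (1 - exp (-2 t)) / 2` for `t ≥ 0`. At `t = log φ`, with `φ` the golden
ratio, one has `sinh t = 1 / 2` and `1 - exp (-2 t) = φ⁻¹`, and the value
`Li₂ φ⁻¹ = π² / 10 - log² φ` gives `A (1 / 2) = π² / 20`. On the other hand, integrating the
binomial series of `(1 + t²)^(-1/2)` twice expands `A` as a power series, whose terms of even and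
odd index are the two hypergeometric series.
-/

open Filter Set
open scoped Topology goldenRatio

section Calculus

lemma eq_of_hasDerivAt_eq_zero {f : ℝ → ℝ} {a b : ℝ} (hab : a ≤ b)
    (hf : ContinuousOn f (Icc a b)) (hf' : ∀ x ∈ Ioo a b, HasDerivAt f 0 x) : f a = f b := by
  obtain rfl | hab := hab.eq_or_lt
  · rfl
  obtain ⟨_, _, hslope⟩ := exists_hasDerivAt_eq_slope f (fun _ => 0) hab hf hf'
  have hba : b - a ≠ 0 := sub_ne_zero.2 hab.ne'
  rw [eq_div_iff hba, zero_mul] at hslope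
  linarith

variable {𝕜 : Type*} [RCLike 𝕜] {a : ℕ → 𝕜} {C : ℝ} {k : ℕ → ℕ}

lemma summable_mul_pow_of_bounded (ha : ∀ n, ‖a n‖ ≤ C) (hk : k.Injective) {x : 𝕜}
    (hx : ‖x‖ < 1) : Summable fun n => a n * x ^ k n := by
  have hgeom := (summable_geometric_of_lt_one (norm_nonneg x) hx).comp_injective hk
  refine Summable.of_norm_bounded (hgeom.mul_left C) fun n => ?_
  rw [norm_mul, norm_pow]
  exact mul_le_mul_of_nonneg_right (ha n) (by positivity)

lemma hasDerivAt_tsum_div_mul_pow_succ (ha : ∀ n, ‖a n‖ ≤ C) (hk : k.Injective) {x : 𝕜}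
    (hx : ‖x‖ < 1) :
    HasDerivAt (fun y => ∑' n, a n / (k n + 1) * y ^ (k n + 1)) (∑' n, a n * x ^ k n) x := by
  obtain ⟨r, hxr, hr⟩ := exists_between hx
  have hr0 : 0 ≤ r := (norm_nonneg x).trans hxr.le
  have hgeom := (summable_geometric_of_lt_one hr0 hr).comp_injective hk
  refine hasDerivAt_tsum_of_isPreconnected (t := Metric.ball (0 : 𝕜) r) (y₀ := 0)
    (g := fun n y => a n / (k n + 1) * y ^ (k n + 1)) (g' := fun n y => a n * y ^ k n)
    (hgeom.mul_left C) Metric.isOpen_ball (convex_ball 0 r).isPreconnected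
    (fun n y _ => ?_) (fun n y hy => ?_)
    (Metric.mem_ball_self ((norm_nonneg x).trans_lt hxr)) ?_ (by simpa)
  · refine ((hasDerivAt_pow (k n + 1) y).const_mul (a n / (k n + 1))).congr_deriv ?_
    have hkn : (k n + 1 : 𝕜) ≠ 0 := Nat.cast_add_one_ne_zero (k n)
    push_cast
    rw [← mul_assoc, div_mul_cancel₀ _ hkn]
  · rw [norm_mul, norm_pow]
    have hC : 0 ≤ C := (norm_nonneg _).trans (ha n)
    exact mul_le_mul (ha n) (pow_le_pow_left₀ (norm_nonneg y) (mem_ball_zero_iff.1 hy).le _)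
      (by positivity) hC
  · simp

lemma continuous_log_mul_log_one_sub : Continuous fun x => log x * log (1 - x) := by
  have at_zero : ContinuousAt (fun x => log x * log (1 - x)) 0 := by
    have hderiv : DifferentiableAt ℝ (fun x : ℝ => log (1 - x)) 0 :=
      DifferentiableAt.log (by fun_prop) (by norm_num)
    have hO : (fun x => log x * log (1 - x)) =O[𝓝 0] fun x => log x * x := by
      simpa using (Asymptotics.isBigO_refl log (𝓝 0)).mul hderiv.hasDerivAt.isBigO_sub
    have hlim : Tendsto (fun x => log x * x) (𝓝 0) (𝓝 0) := by
      simpa [mul_comm] using continuous_mul_log.tendsto 0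
    simpa [ContinuousAt] using hO.trans_tendsto hlim
  have at_one : ContinuousAt (fun x => log x * log (1 - x)) 1 := by
    have hsub : ContinuousAt (fun x : ℝ => 1 - x) 1 := by fun_prop
    simpa [Function.comp_def, mul_comm] using
      ContinuousAt.comp_of_eq at_zero hsub (sub_self 1)
  refine continuous_iff_continuousAt.2 fun x => ?_
  obtain rfl | h0 := eq_or_ne x 0
  · exact at_zero
  obtain rfl | h1 := eq_or_ne x 1
  · exact at_one
  · exact (continuousAt_log h0).mul (ContinuousAt.log (by fun_prop) (sub_ne_zero.2 h1.symm))

lemma hasDerivAt_log_one_sub {x : ℝ} (hx : x ≠ 1) :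
    HasDerivAt (fun y => log (1 - y)) (-1 / (1 - x)) x :=
  ((hasDerivAt_id x).const_sub 1).log (sub_ne_zero.2 hx.symm)

end Calculus

section Dilogarithm

/-- The dilogarithm `Li₂ x = ∑_{m ≥ 1} xᵐ / m²` (the index is shifted by one), for `|x| ≤ 1`;
outside this interval the series diverges and the value is the junk value `0`. -/
noncomputable def dilog (x : ℝ) : ℝ := ∑' n : ℕ, x ^ (n + 1) / ((n : ℝ) + 1) ^ 2

lemma dilog_zero : dilog 0 = 0 := by simp [dilog]

lemma dilog_one : dilog 1 = π ^ 2 / 6 := by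
  have h := (hasSum_nat_add_iff' 1).2 hasSum_zeta_two
  simpa [dilog] using h.tsum_eq

lemma continuousOn_dilog : ContinuousOn dilog (Icc (-1) 1) := by
  have hsum : Summable fun n : ℕ => 1 / ((n : ℝ) + 1) ^ 2 := by
    simpa using (summable_nat_add_iff 1).2 hasSum_zeta_two.summable
  refine continuousOn_tsum (fun n => by fun_prop) hsum fun n x hx => ?_
  rw [norm_div, norm_pow, norm_of_nonneg (by positivity : 0 ≤ ((n : ℝ) + 1) ^ 2)]
  gcongr
  exact pow_le_one₀ (norm_nonneg x) (abs_le.2 hx)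

lemma hasDerivAt_dilog {x : ℝ} (hx : |x| < 1) (h0 : x ≠ 0) :
    HasDerivAt dilog (-log (1 - x) / x) x := by
  have hbound (n : ℕ) : ‖1 / ((n : ℝ) + 1)‖ ≤ 1 := by
    rw [norm_of_nonneg (by positivity)]
    exact div_le_one_of_le₀ (by simp) (by positivity)
  have hderiv : HasDerivAt dilog (∑' n : ℕ, 1 / ((n : ℝ) + 1) * x ^ n) x := by
    refine (hasDerivAt_tsum_div_mul_pow_succ hbound Function.injective_id hx).congr_of_eventuallyEq
      (.of_forall fun y => tsum_congr fun n => ?_)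
    rw [id, div_div, ← sq]
    ring
  refine hderiv.congr_deriv ?_
  rw [eq_div_iff h0, ← (hasSum_pow_div_log_of_abs_lt_one hx).tsum_eq, ← tsum_mul_right]
  exact tsum_congr fun n => by ring

lemma dilog_add_dilog_neg_of_nonneg {x : ℝ} (h0 : 0 ≤ x) (h1 : x ≤ 1) :
    dilog x + dilog (-x) = dilog (x ^ 2) / 2 := by
  let f (y : ℝ) := dilog y + dilog (-y) - dilog (y ^ 2) / 2
  suffices f 0 = f x by
    norm_num [f, dilog_zero] at this
    linarith
  refine eq_of_hasDerivAt_eq_zero h0 ?_ fun y ⟨hy0, hyx⟩ => ?_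
  · refine ((continuousOn_dilog.mono ?_).add (continuousOn_dilog.comp (by fun_prop) ?_)).sub
      ((continuousOn_dilog.comp (by fun_prop) ?_).div_const 2) <;>
      rintro y ⟨hy0, hyx⟩ <;> constructor <;> nlinarith
  · have hy1 : y < 1 := hyx.trans_le h1
    have hpos := hasDerivAt_dilog (abs_lt.2 ⟨by linarith, hy1⟩) hy0.ne'
    have hneg := (hasDerivAt_dilog (x := -y) (abs_lt.2 ⟨by linarith, by linarith⟩)
      (by linarith)).comp y (hasDerivAt_neg y)
    have hsq := (hasDerivAt_dilog (x := y ^ 2) (abs_lt.2 ⟨by nlinarith, by nlinarith⟩)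
      (by positivity)).comp y (hasDerivAt_pow 2 y)
    refine ((hpos.add hneg).sub (hsq.div_const 2)).congr_deriv ?_
    have hlog : log (1 - y ^ 2) = log (1 - y) + log (1 - -y) := by
      rw [← log_mul (by linarith) (by linarith)]
      ring_nf
    rw [hlog]
    field_simp
    ring

lemma dilog_add_dilog_neg {x : ℝ} (hx : |x| ≤ 1) :
    dilog x + dilog (-x) = dilog (x ^ 2) / 2 := by
  obtain ⟨hx1, hx2⟩ := abs_le.1 hx
  obtain h | h := le_total 0 x
  · exact dilog_add_dilog_neg_of_nonneg h hx2
  · simpa [add_comm] using dilog_add_dilog_neg_of_nonneg (neg_nonneg.2 h) (by linarith)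

lemma dilog_add_dilog_div_sub_one_of_nonneg {x : ℝ} (h0 : 0 ≤ x) (h1 : x ≤ 1 / 2) :
    dilog x + dilog (x / (x - 1)) = -log (1 - x) ^ 2 / 2 := by
  let f (y : ℝ) := dilog y + dilog (y / (y - 1)) + log (1 - y) ^ 2 / 2
  suffices f 0 = f x by
    norm_num [f, dilog_zero] at this
    linarith
  refine eq_of_hasDerivAt_eq_zero h0 ?_ fun y ⟨hy0, hyx⟩ => ?_
  · refine ((continuousOn_dilog.mono ?_).add (continuousOn_dilog.comp ?_ ?_)).add
      ((ContinuousOn.log (by fun_prop) ?_).pow 2 |>.div_const 2)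
    · exact Icc_subset_Icc (by norm_num) (by linarith)
    · exact ContinuousOn.div (by fun_prop) (by fun_prop) fun y hy => by linarith [hy.2]
    · rintro y ⟨_, hyx⟩
      have hneg : y - 1 < 0 := by linarith
      exact ⟨by rw [le_div_iff_of_neg hneg]; linarith, by rw [div_le_iff_of_neg hneg]; linarith⟩
    · exact fun y hy => by linarith [hy.2]
  · have hy1 : 0 < 1 - y := by linarith
    have hneg : y - 1 < 0 := by linarith
    have hdiv : |y / (y - 1)| < 1 := by
      rw [abs_div, abs_of_pos hy0, abs_of_neg hneg, div_lt_one (by linarith)]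
      linarith
    have hid := hasDerivAt_dilog (abs_lt.2 ⟨by linarith, by linarith⟩) hy0.ne'
    have hmob := (hasDerivAt_dilog hdiv (div_ne_zero hy0.ne' hneg.ne)).comp y
      ((hasDerivAt_id y).div ((hasDerivAt_id y).sub_const 1) hneg.ne)
    have hlog := ((hasDerivAt_log_one_sub (x := y) (by linarith)).pow 2).div_const 2
    refine ((hid.add hmob).add hlog).congr_deriv ?_
    have hinv : log (1 - y / (y - 1)) = -log (1 - y) := by
      rw [← log_inv]
      congr 1
      field_simp [hneg.ne]
      ring
    rw [hinv]
    simp only [neg_neg, id_eq, one_mul, mul_one, sub_sub_cancel_left, Nat.cast_ofNat,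
      Nat.add_one_sub_one, pow_one]
    field_simp [hneg.ne]
    ring

-- The involution `x ↦ x / (x - 1)` exchanges `[-1, 0]` and `[0, 1 / 2]`.
lemma dilog_add_dilog_div_sub_one {x : ℝ} (h0 : -1 ≤ x) (h1 : x ≤ 1 / 2) :
    dilog x + dilog (x / (x - 1)) = -log (1 - x) ^ 2 / 2 := by
  obtain h | h := le_total 0 x
  · exact dilog_add_dilog_div_sub_one_of_nonneg h h1
  have hneg : x - 1 < 0 := by linarith
  have key := dilog_add_dilog_div_sub_one_of_nonneg (x := x / (x - 1))
    (div_nonneg_of_nonpos h hneg.le) (by rw [div_le_iff_of_neg hneg]; linarith)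
  have hinvol : x / (x - 1) / (x / (x - 1) - 1) = x := by field_simp [hneg.ne]; ring
  have hinv : 1 - x / (x - 1) = (1 - x)⁻¹ := by
    have : 1 - x ≠ 0 := by linarith
    field_simp [hneg.ne]
    ring
  rw [hinvol, hinv, log_inv, neg_sq] at key
  rw [add_comm, key]

lemma dilog_add_dilog_one_sub {x : ℝ} (h0 : 0 < x) (h1 : x < 1) :
    dilog x + dilog (1 - x) = π ^ 2 / 6 - log x * log (1 - x) := by
  let f (y : ℝ) := dilog y + dilog (1 - y) + log y * log (1 - y)
  suffices f 0 = f x by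
    norm_num [f, dilog_zero, dilog_one] at this
    linarith
  refine eq_of_hasDerivAt_eq_zero h0.le ?_ fun y ⟨hy0, hyx⟩ => ?_
  · refine ((continuousOn_dilog.mono ?_).add (continuousOn_dilog.comp (by fun_prop) ?_)).add
      continuous_log_mul_log_one_sub.continuousOn <;>
      rintro y ⟨hy0, hyx⟩ <;> constructor <;> linarith
  · have hy1 : 0 < 1 - y := by linarith
    have hid := hasDerivAt_dilog (abs_lt.2 ⟨by linarith, by linarith⟩) hy0.ne'
    have hsub := (hasDerivAt_dilog (x := 1 - y) (abs_lt.2 ⟨by linarith, by linarith⟩)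
      hy1.ne').comp y ((hasDerivAt_id y).const_sub 1)
    have hlog := (hasDerivAt_log hy0.ne').mul (hasDerivAt_log_one_sub (x := y) (by linarith))
    refine ((hid.add hsub).add hlog).congr_deriv ?_
    rw [sub_sub_cancel]
    field_simp
    ring

lemma dilog_inv_goldenRatio : dilog φ⁻¹ = π ^ 2 / 10 - log φ ^ 2 := by
  have hpos : 0 < φ⁻¹ := inv_pos.2 goldenRatio_pos
  have hlt : φ⁻¹ < 1 := inv_lt_one_of_one_lt₀ one_lt_goldenRatio
  have hsq : 1 - φ⁻¹ = φ⁻¹ ^ 2 := by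
    rw [inv_goldenRatio, neg_sq, goldenConj_sq]
    ring
  have hhalf : φ⁻¹ ^ 2 ≤ 1 / 2 := by nlinarith
  have hmob : φ⁻¹ ^ 2 / (φ⁻¹ ^ 2 - 1) = -φ⁻¹ := by
    rw [← hsq, sub_sub_cancel_left, hsq]
    field_simp
  have hdup := dilog_add_dilog_neg (x := φ⁻¹) (abs_le.2 ⟨by linarith, hlt.le⟩)
  have hlanden := dilog_add_dilog_div_sub_one (by linarith [sq_nonneg φ⁻¹]) hhalf
  have hrefl := dilog_add_dilog_one_sub hpos hlt
  rw [hmob, ← hsq, sub_sub_cancel, log_inv] at hlanden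
  rw [hsq, log_pow, log_inv] at hrefl
  rw [hsq] at hlanden
  push_cast at hrefl
  linarith

end Dilogarithm

section Pochhammer

lemma poch_zero (a : ℝ) : poch a 0 = 1 := by simp [poch]

lemma poch_succ (a : ℝ) (n : ℕ) : poch a (n + 1) = poch a n * (a + n) :=
  ascPochhammer_succ_eval n a

lemma poch_succ_left (a : ℝ) (n : ℕ) : poch a (n + 1) = a * poch (a + 1) n := by
  simp [poch, ascPochhammer_succ_left]

lemma poch_pos {a : ℝ} (ha : 0 < a) (n : ℕ) : 0 < poch a n := ascPochhammer_pos n a ha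

lemma poch_one (n : ℕ) : poch 1 n = n.factorial := ascPochhammer_eval_one ℝ n

lemma poch_le_poch {a b : ℝ} (ha : 0 < a) (hab : a ≤ b) (n : ℕ) : poch a n ≤ poch b n := by
  induction n with
  | zero => simp [poch_zero]
  | succ n ih =>
    have := poch_pos (ha.trans_le hab) n
    rw [poch_succ, poch_succ]
    gcongr

lemma poch_two_mul (a : ℝ) (n : ℕ) :
    poch a (2 * n) = 4 ^ n * (poch (a / 2) n * poch ((a + 1) / 2) n) := by
  induction n with
  | zero => simp [poch_zero]
  | succ n ih =>
    rw [mul_add_one, poch_succ, poch_succ, ih, poch_succ, poch_succ]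
    push_cast
    ring

lemma poch_div_poch_add_one {a : ℝ} (ha : 0 < a) (n : ℕ) :
    poch a n / poch (a + 1) n = a / (a + n) := by
  have hn : a + n ≠ 0 := by positivity
  rw [div_eq_div_iff (poch_pos (by linarith) n).ne' hn, ← poch_succ, poch_succ_left]

lemma choose_neg_eq_poch (a : ℝ) (n : ℕ) :
    Ring.choose (-a) n = (-1) ^ n * poch a n / n.factorial := by
  rw [Ring.choose_neg', eq_div_iff (by positivity)]
  have h := Ring.factorial_nsmul_multichoose_eq_ascPochhammer a n
  rw [Polynomial.ascPochhammer_smeval_eq_eval, nsmul_eq_mul] at h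
  simp only [poch, ← h, Int.negOnePow_def, zpow_natCast, Units.smul_def, zsmul_eq_mul]
  push_cast
  ring

lemma choose_neg_two_mul (a : ℝ) (n : ℕ) :
    Ring.choose (-a) (2 * n) =
      poch (a / 2) n * poch ((a + 1) / 2) n / (poch (1 / 2) n * n.factorial) := by
  rw [choose_neg_eq_poch, ← poch_one, poch_two_mul, poch_two_mul, ← poch_one,
    mul_div_assoc, mul_div_mul_left _ _ (by positivity)]
  norm_num

lemma choose_neg_two_mul_add_one (a : ℝ) (n : ℕ) :
    Ring.choose (-a) (2 * n + 1) =
      -a * (poch ((a + 1) / 2) n * poch ((a + 2) / 2) n / (poch (3 / 2) n * n.factorial)) := by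
  rw [choose_neg_eq_poch, ← poch_one, poch_succ_left, poch_succ_left, poch_two_mul, poch_two_mul,
    ← poch_one, one_mul, mul_left_comm a, mul_div_assoc, mul_div_mul_left _ _ (by positivity),
    pow_succ, pow_mul]
  norm_num
  ring_nf

lemma abs_choose_neg_le_one {a : ℝ} (h0 : 0 < a) (h1 : a ≤ 1) (n : ℕ) :
    |Ring.choose (-a) n| ≤ 1 := by
  have hpos := poch_pos h0 n
  rw [choose_neg_eq_poch, ← poch_one, abs_div, abs_mul, abs_neg_one_pow, one_mul, abs_of_pos hpos,
    abs_of_pos (poch_pos one_pos n)]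
  exact div_le_one_of_le₀ (poch_le_poch h0 h1 n) (poch_pos one_pos n).le

end Pochhammer

section Arsinh

lemma hasSum_choose_mul_pow (a : ℝ) {x : ℝ} (hx : |x| < 1) :
    HasSum (fun n => Ring.choose a n * x ^ n) ((1 + x) ^ a) := by
  have h := (one_add_rpow_hasFPowerSeriesOnBall_zero (a := a)).hasSum (y := x)
    (by simpa [enorm_eq_nnnorm, ← NNReal.coe_lt_one] using hx)
  simpa [binomialSeries, FormalMultilinearSeries.coeff_ofScalars, mul_comm] using h

lemma abs_choose_neg_half_div_le_one (n : ℕ) :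
    |Ring.choose (-(1 / 2) : ℝ) n / (2 * n + 1)| ≤ 1 := by
  have hn : (1 : ℝ) ≤ 2 * n + 1 := by simp
  rw [abs_div, abs_of_pos (by positivity : (0 : ℝ) < 2 * n + 1)]
  exact div_le_one_of_le₀
    ((abs_choose_neg_le_one (by norm_num) (by norm_num) n).trans hn) (by positivity)

lemma arsinh_eq_tsum {x : ℝ} (hx : |x| < 1) :
    arsinh x = ∑' n : ℕ, Ring.choose (-(1 / 2) : ℝ) n / (2 * n + 1) * x ^ (2 * n + 1) := by
  have hderiv {y : ℝ} (hy : |y| < 1) : HasDerivAt (fun z => ∑' n : ℕ,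
      Ring.choose (-(1 / 2) : ℝ) n / (2 * n + 1) * z ^ (2 * n + 1)) (√(1 + y ^ 2))⁻¹ y := by
    have hsq : |y ^ 2| < 1 := by rw [abs_pow]; exact pow_lt_one₀ (abs_nonneg y) hy two_ne_zero
    rw [sqrt_eq_rpow, ← rpow_neg (by positivity), ← (hasSum_choose_mul_pow _ hsq).tsum_eq]
    simpa [pow_mul] using hasDerivAt_tsum_div_mul_pow_succ (𝕜 := ℝ)
      (abs_choose_neg_le_one (a := 1 / 2) (by norm_num) (by norm_num))
      (mul_right_injective₀ (two_ne_zero' ℕ)) hy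
  refine IsOpen.eqOn_of_deriv_eq (s := Ioo (-1) 1) (x := 0) isOpen_Ioo isPreconnected_Ioo
    differentiable_arsinh.differentiableOn
    (fun y hy => (hderiv (abs_lt.2 hy)).differentiableAt.differentiableWithinAt)
    (fun y hy => ?_) (by norm_num) (by simp) (abs_lt.1 hx)
  rw [(hasDerivAt_arsinh y).deriv, (hderiv (abs_lt.2 hy)).deriv]

/-- The integral `∫₀ˣ arsinh t / t dt` for `|x| < 1`, encoded by its power series. -/
noncomputable def arsinhIntegral (x : ℝ) : ℝ :=
  ∑' n : ℕ, Ring.choose (-(1 / 2) : ℝ) n / (2 * n + 1) ^ 2 * x ^ (2 * n + 1)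

lemma arsinhIntegral_zero : arsinhIntegral 0 = 0 := by simp [arsinhIntegral]

lemma hasDerivAt_arsinhIntegral_tsum {x : ℝ} (hx : |x| < 1) :
    HasDerivAt arsinhIntegral
      (∑' n : ℕ, Ring.choose (-(1 / 2) : ℝ) n / (2 * n + 1) * x ^ (2 * n)) x := by
  refine (hasDerivAt_tsum_div_mul_pow_succ (𝕜 := ℝ) abs_choose_neg_half_div_le_one
    (mul_right_injective₀ (two_ne_zero' ℕ)) hx).congr_of_eventuallyEq
    (.of_forall fun y => tsum_congr fun n => ?_)
  push_cast
  rw [div_div, ← sq]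

lemma hasDerivAt_arsinhIntegral {x : ℝ} (hx : |x| < 1) (h0 : x ≠ 0) :
    HasDerivAt arsinhIntegral (arsinh x / x) x := by
  refine (hasDerivAt_arsinhIntegral_tsum hx).congr_deriv ?_
  rw [eq_div_iff h0, arsinh_eq_tsum hx, ← tsum_mul_right]
  exact tsum_congr fun n => by ring

lemma cosh_div_sinh (t : ℝ) :
    cosh t / sinh t = (1 + exp (-2 * t)) / (1 - exp (-2 * t)) := by
  have hexp : exp (-2 * t) = exp (-t) / exp t := by rw [← exp_sub]; ring_nf
  rw [cosh_eq, sinh_eq, hexp, div_div_div_cancel_right₀ two_ne_zero]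
  field_simp

lemma arsinhIntegral_sinh {t : ℝ} (h0 : 0 ≤ t) (h1 : sinh t < 1) :
    arsinhIntegral (sinh t) = t ^ 2 / 2 + dilog (1 - exp (-2 * t)) / 2 := by
  let f (s : ℝ) := arsinhIntegral (sinh s) - s ^ 2 / 2 - dilog (1 - exp (-2 * s)) / 2
  suffices f 0 = f t by
    norm_num [f, dilog_zero, arsinhIntegral_zero] at this
    rw [neg_mul]
    linarith
  have hsinh {s : ℝ} (hs : s ∈ Icc 0 t) : |sinh s| < 1 := by
    rw [abs_of_nonneg (sinh_nonneg_iff.2 hs.1)]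
    exact (sinh_le_sinh.2 hs.2).trans_lt h1
  refine eq_of_hasDerivAt_eq_zero h0 ?_ fun s hs => ?_
  · refine ContinuousOn.sub (ContinuousOn.sub (fun s hs => ?_) (by fun_prop))
      ((continuousOn_dilog.comp (by fun_prop) fun s hs => ?_).div_const 2)
    · exact ((hasDerivAt_arsinhIntegral_tsum (hsinh hs)).continuousAt.comp
        continuous_sinh.continuousAt).continuousWithinAt
    · have hexp : exp (-2 * s) ≤ 1 := exp_le_one_iff.2 (by linarith [hs.1])
      exact ⟨by linarith, by linarith [exp_pos (-2 * s)]⟩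
  · have hexp : exp (-2 * s) < 1 := exp_lt_one_iff.2 (by linarith [hs.1])
    have hexp0 := exp_pos (-2 * s)
    have hint := (hasDerivAt_arsinhIntegral (hsinh (Ioo_subset_Icc_self hs))
      (sinh_pos_iff.2 hs.1).ne').comp s (hasDerivAt_sinh s)
    have hdilog := (hasDerivAt_dilog (x := 1 - exp (-2 * s))
      (abs_lt.2 ⟨by linarith, by linarith⟩) (by linarith)).comp s
      (((hasDerivAt_id s).const_mul (-2)).exp.const_sub 1)
    refine ((hint.sub ((hasDerivAt_pow 2 s).div_const 2)).sub
      (hdilog.div_const 2)).congr_deriv ?_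
    rw [arsinh_sinh, div_mul_eq_mul_div, mul_div_assoc, cosh_div_sinh, sub_sub_cancel, log_exp]
    have hne : 1 - exp (-2 * s) ≠ 0 := by linarith
    rw [id]
    generalize exp (-2 * s) = q at hne ⊢
    push_cast
    field_simp
    ring

lemma arsinhIntegral_one_half : arsinhIntegral (1 / 2) = π ^ 2 / 20 := by
  have hsinh : sinh (log φ) = 1 / 2 := by
    rw [sinh_log goldenRatio_pos, inv_goldenRatio, sub_neg_eq_add, goldenRatio_add_goldenConj]
  have hexp : 1 - exp (-2 * log φ) = φ⁻¹ := by
    have : exp (-2 * log φ) = ψ ^ 2 := by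
      rw [← neg_sq, ← inv_goldenRatio, ← exp_log (inv_pos.2 goldenRatio_pos), ← exp_nat_mul,
        log_inv]
      push_cast
      ring_nf
    rw [this, goldenConj_sq, inv_goldenRatio]
    ring
  have h := arsinhIntegral_sinh (log_nonneg one_lt_goldenRatio.le) (by rw [hsinh]; norm_num)
  rw [hsinh, hexp, dilog_inv_goldenRatio] at h
  linarith

lemma choose_neg_half_two_mul_div_sq (n : ℕ) :
    Ring.choose (-(1 / 2) : ℝ) (2 * n) / (2 * (2 * n : ℕ) + 1) ^ 2 =
      poch (1 / 4) n ^ 3 * poch (3 / 4) n /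
        (poch (1 / 2) n * poch (5 / 4) n ^ 2 * n.factorial) := by
  have hratio : 1 / (2 * (2 * n : ℕ) + 1 : ℝ) = poch (1 / 4) n / poch (5 / 4) n := by
    rw [show (5 / 4 : ℝ) = 1 / 4 + 1 by norm_num, poch_div_poch_add_one (by norm_num)]
    push_cast
    field_simp
    ring
  calc
    _ = Ring.choose (-(1 / 2) : ℝ) (2 * n) * (1 / (2 * (2 * n : ℕ) + 1)) ^ 2 := by
      rw [div_pow, one_pow, mul_one_div]
    _ = poch (1 / 4) n * poch (3 / 4) n / (poch (1 / 2) n * n.factorial) *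
          (poch (1 / 4) n / poch (5 / 4) n) ^ 2 := by
      rw [hratio, choose_neg_two_mul]
      norm_num
    _ = _ := by ring

lemma choose_neg_half_two_mul_add_one_div_sq (n : ℕ) :
    Ring.choose (-(1 / 2) : ℝ) (2 * n + 1) / (2 * (2 * n + 1 : ℕ) + 1) ^ 2 =
      -(1 / 18) * (poch (3 / 4) n ^ 3 * poch (5 / 4) n /
        (poch (3 / 2) n * poch (7 / 4) n ^ 2 * n.factorial)) := by
  have hratio : 1 / (2 * (2 * n + 1 : ℕ) + 1 : ℝ) = poch (3 / 4) n / poch (7 / 4) n / 3 := by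
    rw [show (7 / 4 : ℝ) = 3 / 4 + 1 by norm_num, poch_div_poch_add_one (by norm_num)]
    push_cast
    field_simp
    ring
  calc
    _ = Ring.choose (-(1 / 2) : ℝ) (2 * n + 1) * (1 / (2 * (2 * n + 1 : ℕ) + 1)) ^ 2 := by
      rw [div_pow, one_pow, mul_one_div]
    _ = -(1 / 2) * (poch (3 / 4) n * poch (5 / 4) n / (poch (3 / 2) n * n.factorial)) *
          (poch (3 / 4) n / poch (7 / 4) n / 3) ^ 2 := by
      rw [hratio, choose_neg_two_mul_add_one]
      norm_num
    _ = _ := by ring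

lemma summable_arsinhIntegral {x : ℝ} (hx : |x| < 1) : Summable fun n : ℕ =>
    Ring.choose (-(1 / 2) : ℝ) n / (2 * n + 1) ^ 2 * x ^ (2 * n + 1) := by
  refine summable_mul_pow_of_bounded (C := 1) (fun n => ?_)
    (fun m n h => by simpa using h) hx
  have hn : (1 : ℝ) ≤ 2 * n + 1 := by simp
  rw [sq, ← div_div, norm_div, norm_of_nonneg (by positivity : (0 : ℝ) ≤ 2 * n + 1)]
  exact div_le_one_of_le₀ ((abs_choose_neg_half_div_le_one n).trans hn) (by positivity)

lemma arsinhIntegral_eq_fourF_three {x : ℝ} (hx : |x| < 1) :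
    arsinhIntegral x =
      x * ∑' n : ℕ, poch (1 / 4) n ^ 3 * poch (3 / 4) n /
          (poch (1 / 2) n * poch (5 / 4) n ^ 2 * n.factorial) * (x ^ 4) ^ n -
      x ^ 3 / 18 * ∑' n : ℕ, poch (3 / 4) n ^ 3 * poch (5 / 4) n /
          (poch (3 / 2) n * poch (7 / 4) n ^ 2 * n.factorial) * (x ^ 4) ^ n := by
  have hsum := summable_arsinhIntegral hx
  have hinj := mul_right_injective₀ (two_ne_zero' ℕ)
  have heven := hsum.comp_injective hinj
  have hodd := hsum.comp_injective ((add_left_injective 1).comp hinj)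
  rw [arsinhIntegral, ← tsum_even_add_odd (f := fun n : ℕ =>
      Ring.choose (-(1 / 2) : ℝ) n / (2 * n + 1) ^ 2 * x ^ (2 * n + 1)) heven hodd,
    sub_eq_add_neg, ← neg_mul, ← tsum_mul_left, ← tsum_mul_left]
  congr 1 <;> refine tsum_congr fun n => ?_
  · rw [choose_neg_half_two_mul_div_sq, ← pow_mul]
    ring
  · rw [choose_neg_half_two_mul_add_one_div_sq, ← pow_mul]
    ring

end Arsinh

/-- `π²/10 = ₄F₃(1/4, 1/4, 1/4, 3/4; 1/2, 5/4, 5/4; 1/16)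
      − (1/72)·₄F₃(3/4, 3/4, 3/4, 5/4; 3/2, 7/4, 7/4; 1/16)`. -/
theorem pi_sq_div_ten_as_fourF_three_combination :
    π^2 / 10
      = (∑' n : ℕ, (poch (1/4) n)^3 * poch (3/4) n /
            (poch (1/2) n * (poch (5/4) n)^2 * (n.factorial : ℝ)) * (1/16 : ℝ)^n)
        - (1/72) * (∑' n : ℕ, (poch (3/4) n)^3 * poch (5/4) n /
            (poch (3/2) n * (poch (7/4) n)^2 * (n.factorial : ℝ)) * (1/16 : ℝ)^n) := by
  have hvalue := arsinhIntegral_one_half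
  rw [arsinhIntegral_eq_fourF_three (by norm_num [abs_of_pos]),
    show (1 / 2 : ℝ) ^ 4 = 1 / 16 by norm_num] at hvalue
  linarith
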